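/- For every s with 5/6 < s ≤ 5/4 and every ε with 0 < ε ≤ (6s−5)/2 there exists a constant C = C(s,ε) > 0 such that for all smooth mean-free divergence-free vector fields u, v, w on T³ one has |b(u,v,w)| ≤ C ‖u‖_{H^s} ‖v‖_{H^s} ‖w‖_{H^{s−ε}}, and consequently |b(u,v,w)| ≤ C ‖u‖_{H^s} ‖v‖_{H^s} ‖w‖_{H^s}. -/

import Mathlib

open MeasureTheory

noncomputable section

/-- A vector field on `ℝ³` is `ℤ³`-periodic (i.e. lives on the torus `T³`). -/
def IsPeriodicVF (u : (Fin 3 → ℝ) → (Fin 3 → ℝ)) : Prop :=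
  ∀ (x : Fin 3 → ℝ) (m : Fin 3 → ℤ), u (x + fun i => (m i : ℝ)) = u x

/-- A vector field has zero mean over the fundamental domain `[0,1]³`. -/
def IsMeanFree (u : (Fin 3 → ℝ) → (Fin 3 → ℝ)) : Prop :=
  ∫ x in Set.Icc (0 : Fin 3 → ℝ) 1, u x = 0

/-- A vector field is divergence-free: `∑ i, ∂ᵢ uᵢ = 0`. -/
def IsDivFree (u : (Fin 3 → ℝ) → (Fin 3 → ℝ)) : Prop :=
  ∀ x : Fin 3 → ℝ, ∑ i, fderiv ℝ u x (Pi.single i 1) i = 0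

/-- The `k`-th Fourier coefficient `û(k) = ∫_{[0,1]³} u(x) e^{-2πi k·x} dx` (componentwise). -/
def fourierCoeffVF (u : (Fin 3 → ℝ) → (Fin 3 → ℝ)) (k : Fin 3 → ℤ) : Fin 3 → ℂ :=
  fun j => ∫ x in Set.Icc (0 : Fin 3 → ℝ) 1,
    (u x j : ℂ) * Complex.exp (-(2 * Real.pi * Complex.I) * ∑ i, (k i : ℂ) * (x i : ℂ))

/-- The squared Euclidean length of a Fourier coefficient vector. -/
def fcNormSq (u : (Fin 3 → ℝ) → (Fin 3 → ℝ)) (k : Fin 3 → ℤ) : ℝ :=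
  ∑ j, Complex.normSq (fourierCoeffVF u k j)

/-- The spectral weight `|2πk|^{2s}`. -/
def specWeight (s : ℝ) (k : Fin 3 → ℤ) : ℝ :=
  ((2 * Real.pi) ^ 2 * ∑ i, ((k i : ℝ)) ^ 2) ^ s

/-- The Sobolev `H^s` norm: `‖u‖_{H^s}² = ∑_{k ≠ 0} |2πk|^{2s} |û(k)|²`. -/
def hsNorm (s : ℝ) (u : (Fin 3 → ℝ) → (Fin 3 → ℝ)) : ℝ :=
  Real.sqrt (∑' k : Fin 3 → ℤ, if k = 0 then 0 else specWeight s k * fcNormSq u k)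

/-- The trilinear form `b(u,v,w) = ∑_{i,j} ∫_{[0,1]³} uᵢ (∂ᵢ vⱼ) wⱼ dx`. -/
def bform (u v w : (Fin 3 → ℝ) → (Fin 3 → ℝ)) : ℝ :=
  ∑ i, ∑ j, ∫ x in Set.Icc (0 : Fin 3 → ℝ) 1,
    u x i * fderiv ℝ v x (Pi.single i 1) j * w x j

/-- Smooth, periodic, mean-free vector field on the torus. -/
def IsSmoothTorusVF (u : (Fin 3 → ℝ) → (Fin 3 → ℝ)) : Prop :=
  ContDiff ℝ (⊤ : ℕ∞) u ∧ IsPeriodicVF u ∧ IsMeanFree u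

end

/-- One-dimensional power sum bound. -/
lemma sum_rpow_aux (q : ℝ) (h0 : 0 ≤ q) (h1 : q < 1) (n : ℕ) :
    ∑ j ∈ Finset.range n, ((j : ℝ) + 1) ^ (-q) ≤ (1 - q)⁻¹ * (n : ℝ) ^ (1 - q) := by
  induction n with
  | zero => simp [Real.zero_rpow (by linarith : (1 - q) ≠ 0)]
  | succ n ih =>
    rw [Finset.sum_range_succ]
    have hq : 0 < 1 - q := by linarith
    have key : (1 - q) * ((n : ℝ) + 1) ^ (-q) + (n : ℝ) ^ (1 - q) ≤ ((n : ℝ) + 1) ^ (1 - q) := by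
      have hn : (0 : ℝ) < (n : ℝ) + 1 := by positivity
      have e1 : ((n : ℝ) + 1) ^ (1 - q) = ((n : ℝ) + 1) ^ (-q) * ((n : ℝ) + 1) := by
        rw [sub_eq_neg_add, Real.rpow_add hn, Real.rpow_one]
      have e2 : (n : ℝ) ^ (1 - q) = ((n : ℝ) / (n + 1)) ^ (1 - q) * ((n : ℝ) + 1) ^ (1 - q) := by
        rw [← Real.mul_rpow (by positivity) hn.le]
        congr 1
        field_simp
      have e3 : ((n : ℝ) / (n + 1)) ^ (1 - q) ≤ 1 - (1 - q) / (n + 1) := by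
        have := rpow_one_add_le_one_add_mul_self (s := -(1 / ((n : ℝ) + 1))) (p := 1 - q)
          (by rw [neg_le_neg_iff, div_le_one hn]; linarith [(Nat.cast_nonneg n : (0 : ℝ) ≤ n)]) hq.le (by linarith)
        have e4 : 1 + -(1 / ((n : ℝ) + 1)) = (n : ℝ) / (n + 1) := by field_simp; ring
        rw [e4] at this
        refine this.trans (le_of_eq ?_)
        field_simp
        ring
      have e5 : (0 : ℝ) < ((n : ℝ) + 1) ^ (1 - q) := by positivity
      calc _ ≤ (1 - q) * ((n : ℝ) + 1) ^ (-q) + (1 - (1 - q) / (n + 1)) * ((n : ℝ) + 1) ^ (1 - q) := by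
            rw [e2]; gcongr
        _ = ((n : ℝ) + 1) ^ (1 - q) := by
            rw [e1]; field_simp; ring
    have : (1 - q)⁻¹ * ((1 - q) * ((n : ℝ) + 1) ^ (-q) + (n : ℝ) ^ (1 - q)) ≤ (1 - q)⁻¹ * ((n : ℝ) + 1) ^ (1 - q) := by
      gcongr
    rw [mul_add, inv_mul_cancel_left₀ hq.ne'] at this
    push_cast
    linarith

lemma sum_int_aux (q : ℝ) (h0 : 0 ≤ q) (h1 : q < 1) (n : ℕ) (hn : 1 ≤ n) :
    ∑ j ∈ Finset.Icc (-(n : ℤ)) n, (max 1 |(j : ℝ)|) ^ (-q) ≤ (1 + 2 * (1 - q)⁻¹) * (n : ℝ) ^ (1 - q) := by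
  have hsub : Finset.Icc (-(n : ℤ)) n ⊆ ({0} : Finset ℤ) ∪ ((Finset.range n).image (fun j : ℕ => (j : ℤ) + 1) ∪
      (Finset.range n).image (fun j : ℕ => -((j : ℤ) + 1))) := by
    intro j hj
    simp only [Finset.mem_Icc] at hj
    simp only [Finset.mem_union, Finset.mem_singleton, Finset.mem_image, Finset.mem_range]
    rcases lt_trichotomy j 0 with h | h | h
    · exact Or.inr (Or.inr ⟨(-j - 1).toNat, by omega, by omega⟩)
    · exact Or.inl h
    · exact Or.inr (Or.inl ⟨(j - 1).toNat, by omega, by omega⟩)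
  have hS := sum_rpow_aux q h0 h1 n
  have hpos : ∀ j : ℤ, 0 ≤ (max 1 |(j : ℝ)|) ^ (-q) := fun j => by positivity
  have hone : (1 : ℝ) ≤ (n : ℝ) ^ (1 - q) :=
    Real.one_le_rpow (by exact_mod_cast hn) (by linarith)
  have hm : ∀ j : ℕ, max 1 |(j : ℝ) + 1| = (j : ℝ) + 1 := fun j => by
    rw [abs_of_nonneg (by positivity)]; exact max_eq_right (by linarith [(Nat.cast_nonneg j : (0 : ℝ) ≤ j)])
  refine (Finset.sum_le_sum_of_subset_of_nonneg hsub fun _ _ _ => hpos _).trans ?_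
  have hu : ∀ (A B : Finset ℤ), ∑ j ∈ A ∪ B, (max 1 |(j : ℝ)|) ^ (-q) ≤
      ∑ j ∈ A, (max 1 |(j : ℝ)|) ^ (-q) + ∑ j ∈ B, (max 1 |(j : ℝ)|) ^ (-q) := fun A B => by
    rw [← Finset.sum_union_inter]
    exact le_add_of_nonneg_right (Finset.sum_nonneg fun _ _ => hpos _)
  refine (hu _ _).trans ?_
  refine (add_le_add_right (hu _ _) _).trans ?_
  rw [Finset.sum_image (by intro a _ b _ h; simpa using h), Finset.sum_image (by intro a _ b _ h; simpa using h)]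
  push_cast
  simp only [abs_neg, hm, Finset.sum_singleton]
  simp only [Int.cast_zero, abs_zero, max_eq_left (zero_le_one' ℝ), Real.one_rpow]
  nlinarith

/-- Lattice sums: `∑_{0<‖k‖≤n} ‖k‖^{-2p} ≤ C n^{3-2p}`. -/
lemma lattice_sum (p : ℝ) (h0 : 0 ≤ p) (h1 : p < 3 / 2) :
    ∃ C : ℝ, 0 < C ∧ ∀ n : ℕ, 1 ≤ n →
      ∑ k ∈ Fintype.piFinset (fun _ : Fin 3 => Finset.Icc (-(n : ℤ)) n),
        (if k = 0 then 0 else ‖k‖ ^ (-(2 * p))) ≤ C * (n : ℝ) ^ (3 - 2 * p) := by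
  set q := 2 * p / 3 with hq
  have hq1 : q < 1 := by rw [hq]; linarith
  have hq0 : 0 ≤ q := by positivity
  have hc : 0 < (1 - q)⁻¹ := inv_pos.2 (by linarith)
  refine ⟨(1 + 2 * (1 - q)⁻¹) ^ 3, by positivity, fun n hn => ?_⟩
  have hle : ∀ k : Fin 3 → ℤ, (if k = 0 then 0 else ‖k‖ ^ (-(2 * p))) ≤ ∏ i, (max 1 |(k i : ℝ)|) ^ (-q) := by
    intro k
    split_ifs with hk
    · positivity
    · have hk1 : (1 : ℝ) ≤ ‖k‖ := by
        obtain ⟨i, hi⟩ := Function.ne_iff.1 hk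
        refine le_trans ?_ (norm_le_pi_norm k i)
        rw [Int.norm_eq_abs]
        exact_mod_cast Int.one_le_abs hi
      calc ‖k‖ ^ (-(2 * p)) = ∏ i : Fin 3, ‖k‖ ^ (-q) := by
            rw [Finset.prod_const, Finset.card_univ, Fintype.card_fin, ← Real.rpow_natCast, ← Real.rpow_mul (by positivity)]
            congr 1; rw [hq]; push_cast; ring
        _ ≤ _ := by
            refine Finset.prod_le_prod (fun _ _ => by positivity) fun i _ => ?_
            refine Real.rpow_le_rpow_of_nonpos (by positivity) (max_le hk1 ?_) (by linarith)
            rw [← Int.norm_eq_abs]; exact norm_le_pi_norm k i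
  refine (Finset.sum_le_sum fun k _ => hle k).trans ?_
  rw [← Finset.prod_univ_sum (fun _ : Fin 3 => Finset.Icc (-(n : ℤ)) n) (fun _ j => (max 1 |(j : ℝ)|) ^ (-q))]
  rw [Finset.prod_const, Finset.card_univ, Fintype.card_fin]
  have e : (n : ℝ) ^ (3 - 2 * p) = ((n : ℝ) ^ (1 - q)) ^ 3 := by
    rw [← Real.rpow_natCast, ← Real.rpow_mul (by positivity)]
    congr 1; rw [hq]; push_cast; ring
  rw [e, ← mul_pow]
  exact pow_le_pow_left₀ (Finset.sum_nonneg fun _ _ => by positivity) (sum_int_aux q hq0 hq1 n hn) 3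

lemma summable_lattice : Summable fun k : Fin 3 → ℤ => ‖k‖⁻¹ ^ 4 := by
  let L := Submodule.span ℤ (Set.range (Pi.basisFun ℝ (Fin 3)))
  have hr : Module.finrank ℤ L = 3 := by
    rw [ZLattice.rank ℝ L]; simp
  have h := ZLattice.summable_norm_pow_inv L 4 (by rw [hr]; norm_num)
  let φ : (Fin 3 → ℤ) → L := fun k => ⟨fun i => (k i : ℝ), by
    rw [Module.Basis.mem_span_iff_repr_mem]
    intro i; simp⟩
  have hφ : Function.Injective φ := by
    intro a b hab
    have := congrArg Subtype.val hab
    funext i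
    have := congrFun this i
    simpa [φ] using this
  refine (h.comp_injective hφ).congr fun k => ?_
  simp only [Function.comp]
  congr 2

open scoped ENNReal in
lemma ennreal_cs {ι : Type*} (f g : ι → ℝ≥0∞) :
    ∑' i, f i * g i ≤ (∑' i, f i ^ 2) ^ (1 / 2 : ℝ) * (∑' i, g i ^ 2) ^ (1 / 2 : ℝ) := by
  rw [ENNReal.tsum_eq_iSup_sum]
  refine iSup_le fun S => ?_
  have h := ENNReal.inner_le_Lp_mul_Lq S f g (p := 2) (q := 2) Real.HolderConjugate.two_two
  refine h.trans ?_
  simp only [ENNReal.rpow_ofNat]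
  gcongr
  · exact ENNReal.sum_le_tsum S
  · exact ENNReal.sum_le_tsum S

open scoped ENNReal

/-- ℓ² norm of a lattice function. -/
noncomputable def ell2 (f : (Fin 3 → ℤ) → ℝ≥0∞) : ℝ≥0∞ := (∑' k, f k ^ 2) ^ (1 / 2 : ℝ)

/-- the kernel -/
noncomputable def ker3 (p : ℝ) (x y : Fin 3 → ℤ) : ℝ≥0∞ :=
  if x ≠ 0 ∧ ‖x‖ ≤ ‖y‖ then ENNReal.ofReal (‖x‖ ^ (-p) * ‖y‖ ^ (-(3 / 2 - p))) else 0

lemma exists_coord_norm_eq (y : Fin 3 → ℤ) : ∃ i, ‖y i‖ = ‖y‖ := by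
  obtain ⟨i, _, hi⟩ := Finset.exists_mem_eq_sup Finset.univ Finset.univ_nonempty (fun i => ‖y i‖₊)
  exact ⟨i, by rw [Pi.norm_def, hi]; rfl⟩

lemma norm_eq_nat (y : Fin 3 → ℤ) : ∃ n : ℕ, ‖y‖ = n := by
  obtain ⟨i, hi⟩ := exists_coord_norm_eq y
  exact ⟨(y i).natAbs, by rw [← hi, Int.norm_eq_abs, Nat.cast_natAbs]; simp⟩

lemma one_le_norm_of_ne {k : Fin 3 → ℤ} (hk : k ≠ 0) : (1 : ℝ) ≤ ‖k‖ := by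
  obtain ⟨i, hi⟩ := Function.ne_iff.1 hk
  refine le_trans ?_ (norm_le_pi_norm k i)
  rw [Int.norm_eq_abs]
  exact_mod_cast Int.one_le_abs hi

lemma ker3_sum (p : ℝ) (h0 : 0 ≤ p) (h1 : p < 3 / 2) :
    ∃ C : ℝ≥0∞, C ≠ ∞ ∧ ∀ y, ∑' x, ker3 p x y ^ 2 ≤ C := by
  obtain ⟨C, hC, h⟩ := lattice_sum p h0 h1
  refine ⟨ENNReal.ofReal C, ENNReal.ofReal_ne_top, fun y => ?_⟩
  by_cases hy : y = 0
  · have : ∀ x, ker3 p x y ^ 2 = 0 := fun x => by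
      have : ¬ (x ≠ 0 ∧ ‖x‖ ≤ ‖y‖) := by
        rintro ⟨hx, hxy⟩
        rw [hy, norm_zero] at hxy
        linarith [one_le_norm_of_ne hx]
      simp [ker3, this]
    simp [this]
  · obtain ⟨n, hn⟩ := norm_eq_nat y
    have hy1 := one_le_norm_of_ne hy
    have hn1 : 1 ≤ n := by rw [hn] at hy1; exact_mod_cast hy1
    have hnpos : (0 : ℝ) < n := by exact_mod_cast hn1
    rw [tsum_eq_sum (s := Fintype.piFinset (fun _ : Fin 3 => Finset.Icc (-(n : ℤ)) n))]
    · have e : ∀ x, ker3 p x y ^ 2 ≤ ENNReal.ofReal ((if x = 0 then 0 else ‖x‖ ^ (-(2 * p))) * (n : ℝ) ^ (-(3 - 2 * p))) := by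
        intro x
        unfold ker3
        split_ifs with h1 h2 h2
        · exact absurd h2 h1.1
        · rw [← ENNReal.ofReal_pow (by positivity), hn, mul_pow, ← Real.rpow_natCast, ← Real.rpow_natCast,
            ← Real.rpow_mul (by positivity), ← Real.rpow_mul (by positivity)]
          apply le_of_eq; congr 3 <;> push_cast <;> ring
        · simp
        · simp
      refine (Finset.sum_le_sum fun x _ => e x).trans ?_
      rw [← ENNReal.ofReal_sum_of_nonneg (fun x _ => by split_ifs <;> positivity), ← Finset.sum_mul]
      apply ENNReal.ofReal_le_ofReal
      calc _ ≤ C * (n : ℝ) ^ (3 - 2 * p) * (n : ℝ) ^ (-(3 - 2 * p)) := by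
            gcongr; exact h n hn1
        _ = C := by rw [mul_assoc, ← Real.rpow_add hnpos]; simp
    · intro x hx
      have : ¬ (x ≠ 0 ∧ ‖x‖ ≤ ‖y‖) := by
        rintro ⟨_, hxy⟩
        apply hx
        rw [Fintype.mem_piFinset]
        intro i
        have := (norm_le_pi_norm x i).trans hxy
        rw [hn, Int.norm_eq_abs] at this
        have : |x i| ≤ (n : ℤ) := by exact_mod_cast this
        rw [Finset.mem_Icc]; exact abs_le.1 this
      simp [ker3, this]

lemma core (p : ℝ) (h0 : 0 ≤ p) (h1 : p < 3 / 2) :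
    ∃ C : ℝ≥0∞, C ≠ ∞ ∧ ∀ f g h : (Fin 3 → ℤ) → ℝ≥0∞,
      ∑' x, ∑' y, f x * g y * h (-(x + y)) * ker3 p x y ≤ C * ell2 f * ell2 g * ell2 h := by
  obtain ⟨C, hC, hk⟩ := ker3_sum p h0 h1
  refine ⟨C ^ (1 / 2 : ℝ), ENNReal.rpow_ne_top_of_nonneg (by norm_num) hC, fun f g h => ?_⟩
  rw [← ENNReal.tsum_prod]
  have e : ∀ z : (Fin 3 → ℤ) × (Fin 3 → ℤ), f z.1 * g z.2 * h (-(z.1 + z.2)) * ker3 p z.1 z.2 =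
      (f z.1 * h (-(z.1 + z.2))) * (g z.2 * ker3 p z.1 z.2) := fun z => by ring
  simp only [e]
  refine (ennreal_cs _ _).trans ?_
  have e1 : ∑' z : (Fin 3 → ℤ) × (Fin 3 → ℤ), (f z.1 * h (-(z.1 + z.2))) ^ 2 = (∑' k, f k ^ 2) * (∑' k, h k ^ 2) := by
    rw [ENNReal.tsum_prod', ← ENNReal.tsum_mul_right]
    refine tsum_congr fun x => ?_
    simp only [mul_pow]
    rw [ENNReal.tsum_mul_left]
    congr 1
    exact ((Equiv.addLeft x).trans (Equiv.neg _)).tsum_eq (fun k => h k ^ 2)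
  have e2 : ∑' z : (Fin 3 → ℤ) × (Fin 3 → ℤ), (g z.2 * ker3 p z.1 z.2) ^ 2 ≤ (∑' k, g k ^ 2) * C := by
    rw [ENNReal.tsum_prod', ENNReal.tsum_comm, ← ENNReal.tsum_mul_right]
    refine ENNReal.tsum_le_tsum fun y => ?_
    simp only [mul_pow]
    rw [ENNReal.tsum_mul_left]
    gcongr
    exact hk y
  rw [e1]
  calc _ ≤ ((∑' k, f k ^ 2) * (∑' k, h k ^ 2)) ^ (1 / 2 : ℝ) * ((∑' k, g k ^ 2) * C) ^ (1 / 2 : ℝ) := by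
        gcongr
    _ = _ := by
        rw [ENNReal.mul_rpow_of_nonneg _ _ (by norm_num), ENNReal.mul_rpow_of_nonneg _ _ (by norm_num)]
        unfold ell2
        ring

lemma rpow_cmp {x y : ℝ} (hx : 1 ≤ x) (hy : 1 ≤ y) (hxy : x ≤ 2 * y) (hyx : y ≤ 2 * x) (r : ℝ) (hr : |r| ≤ 2) :
    x ^ r ≤ 4 * y ^ r := by
  have h2 : (2 : ℝ) ^ |r| ≤ 4 := by
    calc (2 : ℝ) ^ |r| ≤ 2 ^ (2 : ℝ) := Real.rpow_le_rpow_of_exponent_le (by norm_num) hr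
      _ = 4 := by norm_num
  have hx0 : 0 < x := by linarith
  have hy0 : 0 < y := by linarith
  rcases le_total 0 r with h | h
  · rw [abs_of_nonneg h] at h2
    calc x ^ r ≤ (2 * y) ^ r := Real.rpow_le_rpow hx0.le hxy h
      _ = 2 ^ r * y ^ r := Real.mul_rpow (by norm_num) hy0.le
      _ ≤ _ := by gcongr
  · rw [abs_of_nonpos h] at h2
    calc x ^ r ≤ (y / 2) ^ r := Real.rpow_le_rpow_of_nonpos (by positivity) (by linarith) h
      _ = 2 ^ (-r) * y ^ r := by
        rw [Real.div_rpow hy0.le (by norm_num), Real.rpow_neg (by norm_num)]; field_simp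
      _ ≤ _ := by gcongr

lemma ptw {s t x y z : ℝ} (hs0 : 5 / 6 < s) (hs : s ≤ 5 / 4) (ht0 : 0 ≤ t) (hts : t ≤ s) (hst : 5 / 2 ≤ 2 * s + t)
    (hx : 1 ≤ x) (hy : 1 ≤ y) (hz : 1 ≤ z) (hxyz : x ≤ y + z) (hyxz : y ≤ x + z) (hzxy : z ≤ x + y) :
    (x ≤ y ∧ x ^ (-s) * y ^ (1 - s) * z ^ (-t) ≤ 16 * (x ^ (-s) * y ^ (-(3 / 2 - s)))) ∨
    (y ≤ x ∧ x ^ (-s) * y ^ (1 - s) * z ^ (-t) ≤ 16 * (y ^ (-(max (s - 1) 0)) * x ^ (-(3 / 2 - max (s - 1) 0)))) ∨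
    (z ≤ x ∧ x ^ (-s) * y ^ (1 - s) * z ^ (-t) ≤ 16 * (z ^ (-t) * x ^ (-(3 / 2 - t)))) := by
  have hx0 : 0 < x := by linarith
  have hy0 : 0 < y := by linarith
  have hz0 : 0 < z := by linarith
  by_cases h1 : x ≤ y ∧ x ≤ z
  · refine Or.inl ⟨h1.1, ?_⟩
    have a := rpow_cmp hz hy (by linarith) (by linarith) (-t) (by rw [abs_neg, abs_of_nonneg ht0]; linarith)
    have b : y ^ (1 - s) * y ^ (-t) ≤ y ^ (-(3 / 2 - s)) := by
      rw [← Real.rpow_add hy0]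
      exact Real.rpow_le_rpow_of_exponent_le hy (by linarith)
    calc _ ≤ x ^ (-s) * y ^ (1 - s) * (4 * y ^ (-t)) := by gcongr
      _ = 4 * (x ^ (-s) * (y ^ (1 - s) * y ^ (-t))) := by ring
      _ ≤ 4 * (x ^ (-s) * y ^ (-(3 / 2 - s))) := by gcongr
      _ ≤ _ := by gcongr; norm_num
  by_cases h2 : y ≤ x ∧ y ≤ z
  · refine Or.inr (Or.inl ⟨h2.1, ?_⟩)
    set α := max (s - 1) 0 with hα
    have hα1 : s - 1 ≤ α := le_max_left _ _
    have a := rpow_cmp hz hx (by linarith) (by linarith) (-t) (by rw [abs_neg, abs_of_nonneg ht0]; linarith)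
    have c : y ^ (1 - s) ≤ y ^ (-α) * x ^ (α + 1 - s) := by
      calc y ^ (1 - s) = y ^ (-α) * y ^ (α + 1 - s) := by
            rw [← Real.rpow_add hy0]; congr 1; ring
        _ ≤ _ := by gcongr; linarith; exact h2.1
    have b : x ^ (-s) * x ^ (α + 1 - s) * x ^ (-t) ≤ x ^ (-(3 / 2 - α)) := by
      rw [← Real.rpow_add hx0, ← Real.rpow_add hx0]
      exact Real.rpow_le_rpow_of_exponent_le hx (by linarith)
    calc _ ≤ x ^ (-s) * (y ^ (-α) * x ^ (α + 1 - s)) * (4 * x ^ (-t)) := by gcongr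
      _ = 4 * (y ^ (-α) * (x ^ (-s) * x ^ (α + 1 - s) * x ^ (-t))) := by ring
      _ ≤ 4 * (y ^ (-α) * x ^ (-(3 / 2 - α))) := by gcongr
      _ ≤ _ := by gcongr; norm_num
  · have hzx : z ≤ x := by
      by_contra hh
      push Not at hh
      rcases le_total x y with h | h
      · exact h1 ⟨h, hh.le⟩
      · exact h2 ⟨h, by linarith⟩
    have hzy : z ≤ y := by
      by_contra hh
      push Not at hh
      rcases le_total x y with h | h
      · exact h1 ⟨h, by linarith⟩
      · exact h2 ⟨h, hh.le⟩
    refine Or.inr (Or.inr ⟨hzx, ?_⟩)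
    have a := rpow_cmp hy hx (by linarith) (by linarith) (1 - s) (by rw [abs_le]; constructor <;> linarith)
    have b : x ^ (-s) * x ^ (1 - s) ≤ x ^ (-(3 / 2 - t)) := by
      rw [← Real.rpow_add hx0]
      exact Real.rpow_le_rpow_of_exponent_le hx (by linarith)
    calc _ ≤ x ^ (-s) * (4 * x ^ (1 - s)) * z ^ (-t) := by gcongr
      _ = 4 * (z ^ (-t) * (x ^ (-s) * x ^ (1 - s))) := by ring
      _ ≤ 4 * (z ^ (-t) * x ^ (-(3 / 2 - t))) := by gcongr
      _ ≤ _ := by gcongr; norm_num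

lemma trilin {s t : ℝ} (hs0 : 5 / 6 < s) (hs : s ≤ 5 / 4) (ht0 : 0 ≤ t) (hts : t ≤ s) (hst : 5 / 2 ≤ 2 * s + t) :
    ∃ C : ℝ≥0∞, C ≠ ∞ ∧ ∀ a b c : (Fin 3 → ℤ) → ℝ≥0∞, a 0 = 0 → b 0 = 0 → c 0 = 0 →
      ∑' k, ∑' l, a k * b l * c (-(k + l)) *
        ENNReal.ofReal (‖k‖ ^ (-s) * ‖l‖ ^ (1 - s) * ‖-(k + l)‖ ^ (-t)) ≤ C * ell2 a * ell2 b * ell2 c := by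
  set α := max (s - 1) 0 with hα
  obtain ⟨C1, hC1, H1⟩ := core s (by linarith) (by linarith)
  obtain ⟨C2, hC2, H2⟩ := core α (le_max_right _ _) (max_lt (by linarith) (by norm_num))
  obtain ⟨C3, hC3, H3⟩ := core t ht0 (by linarith)
  refine ⟨16 * (C1 + C2 + C3), by finiteness, fun a b c ha hb hc => ?_⟩
  have pt : ∀ k l, a k * b l * c (-(k + l)) * ENNReal.ofReal (‖k‖ ^ (-s) * ‖l‖ ^ (1 - s) * ‖-(k + l)‖ ^ (-t)) ≤
      16 * (a k * b l * c (-(k + l)) * ker3 s k l + a k * b l * c (-(k + l)) * ker3 α l k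
        + a k * b l * c (-(k + l)) * ker3 t (-(k + l)) k) := by
    intro k l
    by_cases hk : k = 0
    · simp [hk, ha]
    by_cases hl : l = 0
    · simp [hl, hb]
    by_cases hm : -(k + l) = 0
    · simp [hm, hc]
    rw [← mul_add, ← mul_add, mul_left_comm]
    gcongr
    have n1 := one_le_norm_of_ne hk
    have n2 := one_le_norm_of_ne hl
    have n3 := one_le_norm_of_ne hm
    have q1 : ‖k‖ ≤ ‖l‖ + ‖-(k + l)‖ := by
      rw [norm_neg, add_comm]; simpa using norm_sub_le (k + l) l
    have q2 : ‖l‖ ≤ ‖k‖ + ‖-(k + l)‖ := by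
      rw [norm_neg, add_comm]; simpa using norm_sub_le (k + l) k
    have q3 : ‖-(k + l)‖ ≤ ‖k‖ + ‖l‖ := by rw [norm_neg]; exact norm_add_le k l
    have conv : ∀ {A B : ℝ}, A ≤ 16 * B → ENNReal.ofReal A ≤ 16 * ENNReal.ofReal B := fun {A B} h => by
      refine (ENNReal.ofReal_le_ofReal h).trans ?_
      rw [ENNReal.ofReal_mul (by norm_num)]; simp
    rcases ptw hs0 hs ht0 hts hst n1 n2 n3 q1 q2 q3 with ⟨h, hbd⟩ | ⟨h, hbd⟩ | ⟨h, hbd⟩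
    · refine (conv hbd).trans ?_
      gcongr
      rw [add_assoc]
      refine le_trans ?_ le_self_add
      rw [ker3, if_pos ⟨hk, h⟩]
    · refine (conv hbd).trans ?_
      gcongr
      refine le_trans ?_ le_self_add
      refine le_trans ?_ le_add_self
      rw [ker3, if_pos ⟨hl, h⟩]
    · refine (conv hbd).trans ?_
      gcongr
      refine le_trans ?_ le_add_self
      rw [ker3, if_pos ⟨hm, h⟩]
  refine (ENNReal.tsum_le_tsum fun k => ENNReal.tsum_le_tsum fun l => pt k l).trans ?_
  simp only [ENNReal.tsum_mul_left, ENNReal.tsum_add]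
  have T1 := H1 a b c
  have T2 : ∑' k, ∑' l, a k * b l * c (-(k + l)) * ker3 α l k ≤ C2 * ell2 b * ell2 a * ell2 c := by
    refine le_trans (le_of_eq ?_) (H2 b a c)
    rw [ENNReal.tsum_comm]
    refine tsum_congr fun k => tsum_congr fun l => ?_
    rw [add_comm k l, mul_comm (b k)]
  have T3 : ∑' k, ∑' l, a k * b l * c (-(k + l)) * ker3 t (-(k + l)) k ≤ C3 * ell2 c * ell2 a * ell2 b := by
    refine le_trans (le_of_eq ?_) (H3 c a b)
    conv_rhs => rw [ENNReal.tsum_comm]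
    refine tsum_congr fun k => ?_
    rw [← ((Equiv.addLeft k).trans (Equiv.neg _)).tsum_eq]
    refine tsum_congr fun l => ?_
    simp only [Equiv.trans_apply, Equiv.coe_addLeft, Equiv.neg_apply]
    have : -(k + -(k + l)) = l := by abel
    rw [this, add_comm l k]
    ring
  calc _ ≤ 16 * (C1 * ell2 a * ell2 b * ell2 c + C2 * ell2 b * ell2 a * ell2 c + C3 * ell2 c * ell2 a * ell2 b) := by
        gcongr
    _ = _ := by ring

/-- smooth periodic complex-valued scalar functions -/
def SP (f : (Fin 3 → ℝ) → ℂ) : Prop :=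
  ContDiff ℝ (⊤ : ℕ∞) f ∧ ∀ (x : Fin 3 → ℝ) (m : Fin 3 → ℤ), f (x + fun i => (m i : ℝ)) = f x

/-- exponentials -/
noncomputable def ee (k : Fin 3 → ℤ) (x : Fin 3 → ℝ) : ℂ :=
  Complex.exp ((2 * Real.pi * Complex.I) * ∑ i, (k i : ℂ) * (x i : ℂ))

/-- Fourier coefficient -/
noncomputable def fc (f : (Fin 3 → ℝ) → ℂ) (k : Fin 3 → ℤ) : ℂ :=
  ∫ x in Set.Icc (0 : Fin 3 → ℝ) 1, f x * ee (-k) x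

/-- directional derivative -/
noncomputable def DD (i : Fin 3) (f : (Fin 3 → ℝ) → ℂ) : (Fin 3 → ℝ) → ℂ :=
  fun x => fderiv ℝ f x (Pi.single i 1)

lemma ee_add (k l x) : ee (k + l) x = ee k x * ee l x := by
  unfold ee
  rw [← Complex.exp_add, ← mul_add, ← Finset.sum_add_distrib]
  congr 3; funext i; simp [add_mul]

lemma ee_norm (k x) : ‖ee k x‖ = 1 := by
  unfold ee
  have : (2 * Real.pi * Complex.I) * ∑ i, (k i : ℂ) * (x i : ℂ) =
      ((2 * Real.pi * ∑ i, (k i : ℝ) * x i : ℝ) : ℂ) * Complex.I := by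
    push_cast; ring
  rw [this, Complex.norm_exp_ofReal_mul_I]

lemma ee_contDiff (k) : ContDiff ℝ (⊤ : ℕ∞) (ee k) := by
  have h : ∀ i : Fin 3, ContDiff ℝ (⊤ : ℕ∞) (fun x : Fin 3 → ℝ => (x i : ℂ)) := fun i =>
    Complex.ofRealCLM.contDiff.comp (contDiff_apply ℝ ℝ i)
  unfold ee
  refine ContDiff.cexp (contDiff_const.mul ?_)
  exact ContDiff.sum fun i _ => contDiff_const.mul (h i)

lemma ee_SP (k) : SP (ee k) := by
  refine ⟨ee_contDiff k, fun x m => ?_⟩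
  unfold ee
  rw [Complex.exp_eq_exp_iff_exists_int]
  refine ⟨∑ i, k i * m i, ?_⟩
  push_cast
  simp only [Pi.add_apply, Complex.ofReal_add, mul_add, Finset.sum_add_distrib, Complex.ofReal_intCast]
  ring

lemma ee_hasFDeriv (k x) : HasFDerivAt (ee k) (ee k x • ((2 * Real.pi * Complex.I) •
    ∑ i, (k i : ℂ) • (Complex.ofRealCLM.comp (ContinuousLinearMap.proj (R := ℝ) (φ := fun _ : Fin 3 => ℝ) i)))) x := by
  unfold ee
  refine HasFDerivAt.cexp (HasFDerivAt.const_mul (HasFDerivAt.fun_sum fun i _ => HasFDerivAt.const_mul ?_ _) _)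
  exact (Complex.ofRealCLM.comp (ContinuousLinearMap.proj (R := ℝ) (φ := fun _ : Fin 3 => ℝ) i)).hasFDerivAt

lemma ee_DD (k : Fin 3 → ℤ) (i : Fin 3) (x) : DD i (ee k) x = (2 * Real.pi * Complex.I * k i) * ee k x := by
  unfold DD
  rw [(ee_hasFDeriv k x).fderiv]
  have : ∑ j, (k j : ℂ) * ((Pi.single i (1 : ℝ) : Fin 3 → ℝ) j : ℂ) = k i := by
    rw [Finset.sum_eq_single i]
    · simp
    · intro j _ hj; simp [hj]
    · simp
  simp [this]
  ring

lemma SP.mul {f g} (hf : SP f) (hg : SP g) : SP (fun x => f x * g x) :=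
  ⟨hf.1.mul hg.1, fun x m => by simp only [hf.2, hg.2]⟩

lemma SP.DD {f} (hf : SP f) (i) : SP (DD i f) := by
  constructor
  · unfold _root_.DD
    exact (hf.1.fderiv_right (m := (⊤ : ℕ∞)) (by simp)).clm_apply contDiff_const
  · intro x m
    unfold _root_.DD
    have : (fun y => f (y + fun i => (m i : ℝ))) = f := funext fun y => hf.2 y m
    rw [← fderiv_comp_add_right, this]

lemma SP.diff {f} (hf : SP f) : Differentiable ℝ f := hf.1.differentiable (by simp)

lemma SP.integrable {f : (Fin 3 → ℝ) → ℂ} (hf : Continuous f) : IntegrableOn f (Set.Icc (0 : Fin 3 → ℝ) 1) :=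
  hf.continuousOn.integrableOn_compact isCompact_Icc

lemma SP.integral_DD {f} (hf : SP f) (i : Fin 3) : ∫ x in Set.Icc (0 : Fin 3 → ℝ) 1, _root_.DD i f x = 0 := by
  have h := integral_divergence_of_hasFDerivAt_off_countable' (0 : Fin 3 → ℝ) 1 (by intro i; simp)
    (fun j => if j = i then f else 0) (fun j x => if j = i then fderiv ℝ f x else 0) ∅ Set.countable_empty
    (fun j => by
      split_ifs
      · exact hf.1.continuous.continuousOn
      · exact continuousOn_const)
    (fun x _ j => by
      split_ifs
      · exact (hf.diff x).hasFDerivAt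
      · exact hasFDerivAt_const _ _)
    (by
      have : (fun x => ∑ j, (if j = i then fderiv ℝ f x else 0) (Pi.single j 1)) = _root_.DD i f := by
        funext x
        rw [Finset.sum_eq_single i]
        · simp [_root_.DD]
        · intro j _ hj; simp [hj]
        · simp
      rw [this]
      exact SP.integrable (hf.DD i).1.continuous)
  have e : ∀ x, ∑ j, (if j = i then fderiv ℝ f x else 0) (Pi.single j 1) = _root_.DD i f x := by
    intro x
    rw [Finset.sum_eq_single i]
    · simp [_root_.DD]
    · intro j _ hj; simp [hj]
    · simp
  simp only [e] at h
  rw [h]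
  apply Finset.sum_eq_zero
  intro j _
  split_ifs with hj
  · rw [sub_eq_zero]
    congr 1
    funext x
    have := hf.2 (Fin.insertNth j 0 x : Fin 3 → ℝ) (Pi.single j 1)
    simp only [Pi.one_apply, Pi.zero_apply]
    rw [← this]
    congr 1
    funext l
    refine Fin.succAboveCases j ?_ (fun l => ?_) l
    · simp
    · simp
  · simp

lemma fc_DD {f} (hf : SP f) (i : Fin 3) (k : Fin 3 → ℤ) :
    fc (DD i f) k = (2 * Real.pi * Complex.I * k i) * fc f k := by
  have h := (hf.mul (ee_SP (-k))).integral_DD i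
  have e : ∀ x, DD i (fun x => f x * ee (-k) x) x =
      DD i f x * ee (-k) x - (2 * Real.pi * Complex.I * k i) * (f x * ee (-k) x) := by
    intro x
    have := ((hf.diff x).hasFDerivAt.mul ((ee_SP (-k)).diff x).hasFDerivAt).fderiv
    have h2 := ee_DD (-k) i x
    unfold DD at h2 ⊢
    change (fderiv ℝ (fun x => f x * ee (-k) x) x) _ = _
    rw [show (fun x => f x * ee (-k) x) = f * ee (-k) from rfl, this]
    simp only [_root_.add_apply, _root_.smul_apply, h2, smul_eq_mul]
    push_cast [Pi.neg_apply]
    ring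
  simp only [e] at h
  rw [integral_sub, integral_const_mul, sub_eq_zero] at h
  · exact h
  · exact SP.integrable ((hf.DD i).mul (ee_SP _)).1.continuous
  · exact SP.integrable (continuous_const.mul (hf.mul (ee_SP _)).1.continuous)

lemma fc_bdd (f) (k) : ‖fc f k‖ ≤ ∫ x in Set.Icc (0 : Fin 3 → ℝ) 1, ‖f x‖ := by
  unfold fc
  refine (norm_integral_le_integral_norm _).trans (le_of_eq ?_)
  simp [ee_norm]

lemma fc_decay {f} (hf : SP f) : ∃ M : ℝ, 0 ≤ M ∧ ∀ k : Fin 3 → ℤ, ‖k‖ ^ 4 * ‖fc f k‖ ≤ M := by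
  let I : Fin 3 → ℝ := fun i => ∫ x in Set.Icc (0 : Fin 3 → ℝ) 1, ‖DD i (DD i (DD i (DD i f))) x‖
  have hI : ∀ i, 0 ≤ I i := fun i => integral_nonneg fun _ => norm_nonneg _
  refine ⟨∑ i, I i, Finset.sum_nonneg fun i _ => hI i, fun k => ?_⟩
  obtain ⟨i, hi⟩ := exists_coord_norm_eq k
  have h := fc_bdd (DD i (DD i (DD i (DD i f)))) k
  rw [fc_DD (((hf.DD i).DD i).DD i), fc_DD ((hf.DD i).DD i), fc_DD (hf.DD i), fc_DD hf] at h
  refine le_trans ?_ (Finset.single_le_sum (fun i _ => hI i) (Finset.mem_univ i))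
  refine le_trans ?_ h
  have e : ‖(2 * Real.pi * Complex.I * k i : ℂ)‖ = 2 * Real.pi * ‖k‖ := by
    rw [← hi]; simp [Int.norm_eq_abs, abs_of_pos Real.pi_pos]
  simp only [norm_mul _ (_ * _), norm_mul _ (fc f k), e]
  have : ‖k‖ ≤ 2 * Real.pi * ‖k‖ := by nlinarith [Real.pi_gt_three, norm_nonneg k]
  calc ‖k‖ ^ 4 * ‖fc f k‖ ≤ (2 * Real.pi * ‖k‖) ^ 4 * ‖fc f k‖ := by gcongr
    _ = _ := by ring

lemma fc_summable {f} (hf : SP f) : Summable fun k => ‖fc f k‖ := by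
  obtain ⟨M, hM, h⟩ := fc_decay hf
  have s1 := summable_lattice.mul_left M
  refine Summable.of_norm_bounded_eventually s1 ?_
  have : ({0} : Set (Fin 3 → ℤ))ᶜ ∈ Filter.cofinite := by simp
  filter_upwards [this] with k hk
  have hk1 := one_le_norm_of_ne (show k ≠ 0 from hk)
  rw [norm_norm, inv_pow, ← div_eq_mul_inv, le_div_iff₀ (by positivity), mul_comm]
  exact h k

lemma mFourier_ee (k : Fin 3 → ℤ) (x : Fin 3 → ℝ) :
    UnitAddTorus.mFourier k (fun i => (x i : UnitAddCircle)) = ee k x := by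
  simp only [UnitAddTorus.mFourier, ContinuousMap.coe_mk, fourier_coe_apply]
  rw [← Complex.exp_sum]
  unfold ee
  congr 1
  rw [Finset.mul_sum]
  refine Finset.sum_congr rfl fun i _ => ?_
  push_cast
  ring

lemma fc_inversion {f} (hf : SP f) (x : Fin 3 → ℝ) : HasSum (fun k => fc f k * ee k x) (f x) := by
  let π : (Fin 3 → ℝ) → UnitAddTorus (Fin 3) := Pi.map (fun _ => ((↑) : ℝ → UnitAddCircle))
  have hq : IsOpenQuotientMap π :=
    IsOpenQuotientMap.piMap fun _ => QuotientAddGroup.isOpenQuotientMap_mk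
  have hfac : Function.FactorsThrough f π := by
    intro x y hxy
    have : ∀ i, ∃ m : ℤ, x i = y i + m := by
      intro i
      have h := congrFun hxy i
      simp only [π, Pi.map_apply] at h
      rw [QuotientAddGroup.eq, AddSubgroup.mem_zmultiples_iff] at h
      obtain ⟨m, hm⟩ := h
      refine ⟨-m, ?_⟩
      push_cast
      simp at hm
      linarith
    choose m hm using this
    rw [show x = y + fun i => (m i : ℝ) from funext hm, hf.2]
  let πc : C(Fin 3 → ℝ, UnitAddTorus (Fin 3)) := ⟨π, hq.continuous⟩
  have hqc : Topology.IsQuotientMap πc := hq.isQuotientMap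
  let F : C(UnitAddTorus (Fin 3), ℂ) := hqc.lift ⟨f, hf.1.continuous⟩ hfac
  have hF : ∀ x, F (fun i => (x i : UnitAddCircle)) = f x := fun x =>
    DFunLike.congr_fun (hqc.lift_comp ⟨f, hf.1.continuous⟩ hfac) x
  have hset : {x : Fin 3 → ℝ | ∀ i, x i ∈ Set.Ioc ((0 : Fin 3 → ℝ) i) ((0 : Fin 3 → ℝ) i + 1)} =
      Set.pi Set.univ fun i => Set.Ioc ((0 : Fin 3 → ℝ) i) ((1 : Fin 3 → ℝ) i) := by
    ext x; simp
  have hco : ∀ k, UnitAddTorus.mFourierCoeff F k = fc f k := by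
    intro k
    rw [UnitAddTorus.mFourierCoeff_eq_integral F k 0, hset]
    unfold fc
    have hae : (Set.pi Set.univ fun i => Set.Ioc ((0 : Fin 3 → ℝ) i) ((1 : Fin 3 → ℝ) i)) =ᵐ[volume]
        Set.Icc (0 : Fin 3 → ℝ) 1 := Measure.univ_pi_Ioc_ae_eq_Icc (μ := fun _ => volume)
    rw [setIntegral_congr_set hae]
    refine integral_congr_ae (Filter.Eventually.of_forall fun x => ?_)
    simp only [mFourier_ee, hF, smul_eq_mul]
    ring
  have hs : Summable (UnitAddTorus.mFourierCoeff F) := by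
    rw [funext hco]; exact (fc_summable hf).of_norm
  have := UnitAddTorus.hasSum_mFourier_series_apply_of_summable hs (fun i => (x i : UnitAddCircle))
  simpa only [mFourier_ee, hF, hco, smul_eq_mul] using this

lemma expand {f G : (Fin 3 → ℝ) → ℂ} (hf : SP f) (hG : Continuous G) :
    ‖∫ x in Set.Icc (0 : Fin 3 → ℝ) 1, f x * G x‖ₑ ≤
      ∑' k, ‖fc f k‖ₑ * ‖∫ x in Set.Icc (0 : Fin 3 → ℝ) 1, ee k x * G x‖ₑ := by
  have hc : ∀ k, Continuous (fun x => fc f k * ee k x * G x) := fun k =>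
    (continuous_const.mul (ee_SP k).1.continuous).mul hG
  have h := hasSum_integral_of_summable_integral_norm (μ := volume.restrict (Set.Icc (0 : Fin 3 → ℝ) 1))
    (F := fun k x => fc f k * ee k x * G x) (fun k => SP.integrable (hc k)) (by
      simp only [norm_mul, ee_norm, mul_one, integral_const_mul]
      exact (fc_summable hf).mul_right _)
  have e : ∀ x, ∑' k, fc f k * ee k x * G x = f x * G x := fun x =>
    ((fc_inversion hf x).mul_right (G x)).tsum_eq
  simp only [e] at h
  rw [← h.tsum_eq]
  refine enorm_tsum_le_tsum_enorm.trans (le_of_eq (tsum_congr fun k => ?_))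
  simp only [mul_assoc, integral_const_mul, enorm_mul]

lemma triple {f g h : (Fin 3 → ℝ) → ℂ} (hf : SP f) (hg : SP g) (hh : SP h) :
    ‖∫ x in Set.Icc (0 : Fin 3 → ℝ) 1, f x * g x * h x‖ₑ ≤
      ∑' k, ∑' l, ‖fc f k‖ₑ * ‖fc g l‖ₑ * ‖fc h (-(k + l))‖ₑ := by
  have h1 := expand hf (G := fun x => g x * h x) (hg.mul hh).1.continuous
  simp only [← mul_assoc] at h1
  refine h1.trans (ENNReal.tsum_le_tsum fun k => ?_)
  simp only [mul_assoc]
  rw [ENNReal.tsum_mul_left]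
  gcongr
  have h2 := expand hg (G := fun x => ee k x * h x) ((ee_SP k).mul hh).1.continuous
  have e : ∀ x, ee k x * (g x * h x) = g x * (ee k x * h x) := fun x => by ring
  simp only [e]
  refine h2.trans (le_of_eq (tsum_congr fun l => ?_))
  congr 2
  unfold fc
  refine integral_congr_ae (Filter.Eventually.of_forall fun x => ?_)
  simp only [neg_neg, ee_add]
  ring

lemma comp_SP {u} (hu : IsSmoothTorusVF u) (j : Fin 3) : SP (fun x => (u x j : ℂ)) := by
  refine ⟨?_, fun x m => by simp only [hu.2.1 x m]⟩
  exact Complex.ofRealCLM.contDiff.comp ((contDiff_apply ℝ ℝ j).comp hu.1)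

lemma coeff_eq (u) (k : Fin 3 → ℤ) (j) : fourierCoeffVF u k j = fc (fun x => (u x j : ℂ)) k := by
  unfold fourierCoeffVF fc ee
  refine integral_congr_ae (Filter.Eventually.of_forall fun x => ?_)
  simp

lemma comp_DD {v} (hv : IsSmoothTorusVF v) (i j : Fin 3) (x) :
    ((fderiv ℝ v x (Pi.single i 1) j : ℝ) : ℂ) = DD i (fun x => (v x j : ℂ)) x := by
  have hd : HasFDerivAt v (fderiv ℝ v x) x := (hv.1.differentiable (by simp) x).hasFDerivAt
  have h2 := (Complex.ofRealCLM.comp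
    (ContinuousLinearMap.proj (R := ℝ) (φ := fun _ : Fin 3 => ℝ) j)).hasFDerivAt.comp x hd
  unfold DD
  have : HasFDerivAt (fun x => (v x j : ℂ)) _ x := h2
  rw [this.fderiv]
  simp

/-- amplitude -/
noncomputable def amp (u : (Fin 3 → ℝ) → (Fin 3 → ℝ)) (k : Fin 3 → ℤ) : ℝ := Real.sqrt (fcNormSq u k)

lemma fcNormSq_nonneg (u k) : 0 ≤ fcNormSq u k := Finset.sum_nonneg fun _ _ => Complex.normSq_nonneg _

lemma coeff_le_amp (u k j) : ‖fc (fun x => (u x j : ℂ)) k‖ ≤ amp u k := by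
  rw [← coeff_eq]
  refine Real.le_sqrt_of_sq_le ?_
  rw [Complex.sq_norm]
  exact Finset.single_le_sum (f := fun j => Complex.normSq (fourierCoeffVF u k j))
    (fun _ _ => Complex.normSq_nonneg _) (Finset.mem_univ j)

lemma amp_zero {u} (hu : IsSmoothTorusVF u) : amp u 0 = 0 := by
  have h : ∀ j, fourierCoeffVF u 0 j = 0 := by
    intro j
    have hi : IntegrableOn u (Set.Icc (0 : Fin 3 → ℝ) 1) :=
      hu.1.continuous.continuousOn.integrableOn_compact isCompact_Icc
    have h1 := (ContinuousLinearMap.proj (R := ℝ) (φ := fun _ : Fin 3 => ℝ) j).integral_comp_comm hi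
    have h2 : ∫ x in Set.Icc (0 : Fin 3 → ℝ) 1, u x = 0 := hu.2.2
    rw [h2, map_zero] at h1
    simp only [ContinuousLinearMap.proj_apply] at h1
    unfold fourierCoeffVF
    simp only [Pi.zero_apply, Int.cast_zero, zero_mul, Finset.sum_const_zero, mul_zero, Complex.exp_zero, mul_one]
    rw [integral_complex_ofReal, h1, Complex.ofReal_zero]
  unfold amp fcNormSq
  simp [h]

lemma sumsq_ge (k : Fin 3 → ℤ) : ‖k‖ ^ 2 ≤ ∑ i, ((k i : ℝ)) ^ 2 := by
  obtain ⟨i, hi⟩ := exists_coord_norm_eq k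
  rw [← hi, Int.norm_eq_abs, sq_abs]
  exact Finset.single_le_sum (f := fun i => ((k i : ℝ)) ^ 2) (fun _ _ => sq_nonneg _) (Finset.mem_univ i)

lemma sumsq_le (k : Fin 3 → ℤ) : ∑ i, ((k i : ℝ)) ^ 2 ≤ 3 * ‖k‖ ^ 2 := by
  calc ∑ i, ((k i : ℝ)) ^ 2 ≤ ∑ i : Fin 3, ‖k‖ ^ 2 := by
        refine Finset.sum_le_sum fun i _ => ?_
        rw [← sq_abs, ← Int.norm_eq_abs]
        have := norm_le_pi_norm k i
        gcongr
    _ = _ := by simp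

lemma base_ge (k : Fin 3 → ℤ) : ‖k‖ ^ 2 ≤ (2 * Real.pi) ^ 2 * ∑ i, ((k i : ℝ)) ^ 2 := by
  have h1 : (1 : ℝ) ≤ (2 * Real.pi) ^ 2 := by nlinarith [Real.pi_gt_three]
  have := sumsq_ge k
  nlinarith [sq_nonneg ‖k‖]

lemma hs_summable {u} (hu : IsSmoothTorusVF u) {s : ℝ} (hs : s ≤ 5 / 4) :
    Summable fun k : Fin 3 → ℤ => if k = 0 then 0 else specWeight s k * fcNormSq u k := by
  choose M hM h using fun j => fc_decay (comp_SP hu j)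
  have s1 := summable_lattice.mul_left (((2 * Real.pi) ^ 2 * 3) ^ 2 * ∑ j, M j ^ 2)
  refine Summable.of_nonneg_of_le (fun k => ?_) (fun k => ?_) s1
  · split_ifs
    · exact le_rfl
    · exact mul_nonneg (by unfold specWeight; positivity) (fcNormSq_nonneg _ _)
  · have hS : 0 ≤ ∑ j, M j ^ 2 := Finset.sum_nonneg fun _ _ => sq_nonneg _
    split_ifs with hk
    · positivity
    have hk1 := one_le_norm_of_ne hk
    have hk0 : 0 < ‖k‖ := by linarith
    have e1 : specWeight s k ≤ ((2 * Real.pi) ^ 2 * 3) ^ 2 * ‖k‖ ^ 4 := by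
      have hb := base_ge k
      have hb1 : 1 ≤ (2 * Real.pi) ^ 2 * ∑ i, ((k i : ℝ)) ^ 2 := by nlinarith
      unfold specWeight
      calc _ ≤ ((2 * Real.pi) ^ 2 * ∑ i, ((k i : ℝ)) ^ 2) ^ (2 : ℝ) :=
            Real.rpow_le_rpow_of_exponent_le hb1 (by linarith)
        _ = ((2 * Real.pi) ^ 2 * ∑ i, ((k i : ℝ)) ^ 2) ^ 2 := by rw [Real.rpow_ofNat]
        _ ≤ ((2 * Real.pi) ^ 2 * (3 * ‖k‖ ^ 2)) ^ 2 := by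
            have := sumsq_le k
            gcongr
        _ = _ := by ring
    have e2 : fcNormSq u k ≤ (∑ j, M j ^ 2) * (‖k‖⁻¹ ^ 4) ^ 2 := by
      unfold fcNormSq
      rw [Finset.sum_mul]
      refine Finset.sum_le_sum fun j _ => ?_
      rw [← Complex.sq_norm, coeff_eq, ← mul_pow]
      refine pow_le_pow_left₀ (norm_nonneg _) ?_ 2
      rw [inv_pow, ← div_eq_mul_inv, le_div_iff₀ (by positivity), mul_comm]
      exact h j k
    calc _ ≤ (((2 * Real.pi) ^ 2 * 3) ^ 2 * ‖k‖ ^ 4) * ((∑ j, M j ^ 2) * (‖k‖⁻¹ ^ 4) ^ 2) :=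
          mul_le_mul e1 e2 (fcNormSq_nonneg _ _) (by positivity)
      _ = _ := by field_simp

lemma hs_mono {u} (hu : IsSmoothTorusVF u) {s t : ℝ} (hts : t ≤ s) (hs : s ≤ 5 / 4) :
    hsNorm t u ≤ hsNorm s u := by
  unfold hsNorm
  refine Real.sqrt_le_sqrt ((hs_summable hu (hts.trans hs)).tsum_le_tsum (fun k => ?_) (hs_summable hu hs))
  split_ifs with hk
  · exact le_rfl
  · have hk1 := one_le_norm_of_ne hk
    have hb := base_ge k
    have hb1 : 1 ≤ (2 * Real.pi) ^ 2 * ∑ i, ((k i : ℝ)) ^ 2 := by nlinarith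
    exact mul_le_mul_of_nonneg_right (Real.rpow_le_rpow_of_exponent_le hb1 hts) (fcNormSq_nonneg _ _)

lemma ell2_le {u} (hu : IsSmoothTorusVF u) {s : ℝ} (hs0 : 0 ≤ s) (hs : s ≤ 5 / 4) :
    ell2 (fun k => ENNReal.ofReal (‖k‖ ^ s * amp u k)) ≤ ENNReal.ofReal (hsNorm s u) := by
  have hnn : ∀ k : Fin 3 → ℤ, 0 ≤ (if k = 0 then 0 else specWeight s k * fcNormSq u k) := fun k => by
    split_ifs
    · exact le_rfl
    · exact mul_nonneg (by unfold specWeight; positivity) (fcNormSq_nonneg _ _)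
  unfold ell2 hsNorm
  rw [Real.sqrt_eq_rpow, ← ENNReal.ofReal_rpow_of_nonneg (tsum_nonneg hnn) (by norm_num),
    ENNReal.ofReal_tsum_of_nonneg hnn (hs_summable hu hs)]
  gcongr with k
  have hamp : 0 ≤ amp u k := Real.sqrt_nonneg _
  dsimp only
  rw [← ENNReal.ofReal_pow (by positivity)]
  apply ENNReal.ofReal_le_ofReal
  split_ifs with hk
  · simp [hk, amp_zero hu]
  · rw [mul_pow, amp, Real.sq_sqrt (fcNormSq_nonneg _ _)]
    refine mul_le_mul_of_nonneg_right ?_ (fcNormSq_nonneg _ _)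
    unfold specWeight
    calc (‖k‖ ^ s) ^ 2 = (‖k‖ ^ 2) ^ s := by
          rw [← Real.rpow_natCast, ← Real.rpow_natCast, ← Real.rpow_mul (by positivity), ← Real.rpow_mul (by positivity), mul_comm]
      _ ≤ _ := Real.rpow_le_rpow (by positivity) (base_ge k) hs0

lemma bform_le {u v w} (hu : IsSmoothTorusVF u) (hv : IsSmoothTorusVF v) (hw : IsSmoothTorusVF w) :
    ENNReal.ofReal |bform u v w| ≤ 9 * ∑' k, ∑' l, ENNReal.ofReal (amp u k) *
      ENNReal.ofReal (2 * Real.pi * ‖l‖ * amp v l) * ENNReal.ofReal (amp w (-(k + l))) := by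
  have key : ∀ i j : Fin 3, ‖∫ x in Set.Icc (0 : Fin 3 → ℝ) 1, u x i * fderiv ℝ v x (Pi.single i 1) j * w x j‖ₑ ≤
      ∑' k, ∑' l, ENNReal.ofReal (amp u k) *
      ENNReal.ofReal (2 * Real.pi * ‖l‖ * amp v l) * ENNReal.ofReal (amp w (-(k + l))) := by
    intro i j
    have h := triple (comp_SP hu i) ((comp_SP hv j).DD i) (comp_SP hw j)
    have e : ∫ x in Set.Icc (0 : Fin 3 → ℝ) 1, (u x i : ℂ) * DD i (fun x => (v x j : ℂ)) x * (w x j : ℂ) =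
        ((∫ x in Set.Icc (0 : Fin 3 → ℝ) 1, u x i * fderiv ℝ v x (Pi.single i 1) j * w x j : ℝ) : ℂ) := by
      rw [← integral_complex_ofReal]
      simp only [← comp_DD hv]
      push_cast
      rfl
    rw [e] at h
    have e2 : ∀ r : ℝ, ‖(r : ℂ)‖ₑ = ‖r‖ₑ := fun r => by
      rw [← ofReal_norm, ← ofReal_norm, Complex.norm_real]
    rw [e2] at h
    refine h.trans (ENNReal.tsum_le_tsum fun k => ENNReal.tsum_le_tsum fun l => ?_)
    simp only [← ofReal_norm]
    gcongr
    · exact coeff_le_amp u k i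
    · rw [fc_DD (comp_SP hv j), norm_mul]
      refine mul_le_mul ?_ (coeff_le_amp v l j) (norm_nonneg _) (by positivity)
      have := norm_le_pi_norm l i
      simp only [norm_mul, Complex.norm_I, Complex.norm_ofNat, Complex.norm_real, Complex.norm_intCast, mul_one,
        Real.norm_eq_abs, abs_of_pos Real.pi_pos]
      rw [← Int.norm_eq_abs]
      gcongr
    · exact coeff_le_amp w _ j
  rw [← Real.norm_eq_abs, ofReal_norm]
  unfold bform
  calc _ ≤ ∑ i : Fin 3, ∑ j : Fin 3, ‖∫ x in Set.Icc (0 : Fin 3 → ℝ) 1, u x i * fderiv ℝ v x (Pi.single i 1) j * w x j‖ₑ :=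
        (enorm_sum_le _ _).trans (Finset.sum_le_sum fun i _ => enorm_sum_le _ _)
    _ ≤ ∑ i : Fin 3, ∑ j : Fin 3, _ := Finset.sum_le_sum fun i _ => Finset.sum_le_sum fun j _ => key i j
    _ = _ := by
      simp only [Finset.sum_const, Finset.card_univ, Fintype.card_fin, nsmul_eq_mul]
      push_cast
      rw [← mul_assoc]
      norm_num

lemma bform_main {s t : ℝ} (hs0 : 5 / 6 < s) (hs : s ≤ 5 / 4) (ht0 : 0 ≤ t) (hts : t ≤ s) (hst : 5 / 2 ≤ 2 * s + t) :
    ∃ C : ℝ, 0 < C ∧ ∀ u v w, IsSmoothTorusVF u → IsSmoothTorusVF v → IsSmoothTorusVF w →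
      |bform u v w| ≤ C * hsNorm s u * hsNorm s v * hsNorm t w := by
  obtain ⟨K, hK, H⟩ := trilin hs0 hs ht0 hts hst
  refine ⟨9 * (2 * Real.pi) * (K.toReal + 1), by positivity, fun u v w hu hv hw => ?_⟩
  set a : (Fin 3 → ℤ) → ℝ≥0∞ := fun k => ENNReal.ofReal (‖k‖ ^ s * amp u k) with ha
  set b : (Fin 3 → ℤ) → ℝ≥0∞ := fun k => ENNReal.ofReal (‖k‖ ^ s * amp v k) with hb
  set c : (Fin 3 → ℤ) → ℝ≥0∞ := fun k => ENNReal.ofReal (‖k‖ ^ t * amp w k) with hc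
  have hamp : ∀ u k, 0 ≤ amp u k := fun u k => Real.sqrt_nonneg _
  have h1 := H a b c (by simp [ha, amp_zero hu]) (by simp [hb, amp_zero hv]) (by simp [hc, amp_zero hw])
  have pt : ∀ k l, ENNReal.ofReal (amp u k) *
      ENNReal.ofReal (2 * Real.pi * ‖l‖ * amp v l) * ENNReal.ofReal (amp w (-(k + l))) ≤
      ENNReal.ofReal (2 * Real.pi) * (a k * b l * c (-(k + l)) *
        ENNReal.ofReal (‖k‖ ^ (-s) * ‖l‖ ^ (1 - s) * ‖-(k + l)‖ ^ (-t))) := by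
    intro k l
    by_cases hk : k = 0
    · simp [hk, amp_zero hu]
    by_cases hl : l = 0
    · simp [hl, amp_zero hv]
    by_cases hm : -(k + l) = 0
    · simp [hm, amp_zero hw]
    have n1 : 0 < ‖k‖ := by linarith [one_le_norm_of_ne hk]
    have n2 : 0 < ‖l‖ := by linarith [one_le_norm_of_ne hl]
    have n3 : 0 < ‖-(k + l)‖ := by linarith [one_le_norm_of_ne hm]
    have p1 := hamp u k
    have p2 := hamp v l
    have p3 := hamp w (-(k + l))
    rw [ha, hb, hc]
    dsimp only
    rw [← ENNReal.ofReal_mul (by positivity), ← ENNReal.ofReal_mul (by positivity), ← ENNReal.ofReal_mul (by positivity),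
      ← ENNReal.ofReal_mul (by positivity), ← ENNReal.ofReal_mul (by positivity), ← ENNReal.ofReal_mul (by positivity)]
    apply le_of_eq
    congr 1
    rw [Real.rpow_neg n1.le, Real.rpow_neg n3.le, Real.rpow_sub n2, Real.rpow_one]
    have : 0 < ‖k‖ ^ s := by positivity
    have : 0 < ‖l‖ ^ s := by positivity
    have : 0 < ‖-(k + l)‖ ^ t := by positivity
    field_simp
  have h2 : ENNReal.ofReal |bform u v w| ≤ ENNReal.ofReal
      (9 * (2 * Real.pi) * (K.toReal + 1) * hsNorm s u * hsNorm s v * hsNorm t w) := by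
    have q : ∀ s u, 0 ≤ hsNorm s u := fun s u => Real.sqrt_nonneg _
    calc _ ≤ _ := bform_le hu hv hw
      _ ≤ 9 * (ENNReal.ofReal (2 * Real.pi) * (K * ell2 a * ell2 b * ell2 c)) := by
        refine mul_le_mul_right ?_ _
        refine (ENNReal.tsum_le_tsum fun k => ENNReal.tsum_le_tsum fun l => pt k l).trans ?_
        simp only [ENNReal.tsum_mul_left]
        gcongr
      _ ≤ 9 * (ENNReal.ofReal (2 * Real.pi) * (ENNReal.ofReal (K.toReal + 1) * ENNReal.ofReal (hsNorm s u) *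
            ENNReal.ofReal (hsNorm s v) * ENNReal.ofReal (hsNorm t w))) := by
        gcongr
        · exact ENNReal.le_ofReal_iff_toReal_le hK (by positivity) |>.2 (by linarith)
        · exact ell2_le hu (by linarith) hs
        · exact ell2_le hv (by linarith) hs
        · exact ell2_le hw ht0 (by linarith)
      _ = _ := by
        have q1 := q s u
        have q2 := q s v
        have q3 := q t w
        rw [show (9 : ℝ≥0∞) = ENNReal.ofReal 9 by simp]
        rw [← ENNReal.ofReal_mul (by positivity), ← ENNReal.ofReal_mul (by positivity), ← ENNReal.ofReal_mul (by positivity),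
          ← ENNReal.ofReal_mul (by positivity), ← ENNReal.ofReal_mul (by positivity)]
        congr 1
        ring
  have q : ∀ s u, 0 ≤ hsNorm s u := fun s u => Real.sqrt_nonneg _
  exact (ENNReal.ofReal_le_ofReal_iff (mul_nonneg (mul_nonneg (mul_nonneg (by positivity) (q _ _)) (q _ _)) (q _ _))).1 h2

theorem bform_estimate_r_r_r_epsilon :
    ∀ s : ℝ, 5/6 < s → s ≤ 5/4 →
    ∀ ε : ℝ, 0 < ε → ε ≤ (6*s - 5)/2 →
    ∃ C : ℝ, 0 < C ∧
      ∀ u v w : (Fin 3 → ℝ) → (Fin 3 → ℝ),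
        IsSmoothTorusVF u → IsDivFree u →
        IsSmoothTorusVF v → IsDivFree v →
        IsSmoothTorusVF w → IsDivFree w →
        |bform u v w| ≤ C * hsNorm s u * hsNorm s v * hsNorm (s - ε) w ∧
        |bform u v w| ≤ C * hsNorm s u * hsNorm s v * hsNorm s w := by
  intro s hs0 hs ε hε hε2
  obtain ⟨C, hC, H⟩ := bform_main (t := s - ε) hs0 hs (by linarith) (by linarith) (by linarith)
  refine ⟨C, hC, fun u v w hu _ hv _ hw _ => ⟨H u v w hu hv hw, (H u v w hu hv hw).trans ?_⟩⟩
  have q : ∀ s u, 0 ≤ hsNorm s u := fun s u => Real.sqrt_nonneg _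
  exact mul_le_mul_of_nonneg_left (hs_mono hw (by linarith) hs)
    (mul_nonneg (mul_nonneg hC.le (q _ _)) (q _ _))
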